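/- For S = {±1, ±5, ±8}, χ(1, 5, 8) = 4: there exists a Borel proper 4-coloring of the Schreier graph G_S on F(2^ℤ), but there is no Borel proper 3-coloring. -/

import Mathlib

/-- The shift action of `ℤ` on `α^ℤ`: `(s · x)(n) = x(n + s)`. -/
def shift {α : Type*} (s : ℤ) (x : ℤ → α) : ℤ → α := fun n => x (n + s)

/-- The free part `F(2^ℤ)` of the shift action on `2^ℤ = (ℤ → Bool)`. -/
def FreePart : Set (ℤ → Bool) := {x | ∀ s : ℤ, s ≠ 0 → shift s x ≠ x}

/-- `c` is a Borel proper coloring of the Schreier graph `G_S` on `F(2^ℤ)`,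
where `S = {±a : a ∈ A}`: `c` is Borel and `c(x) ≠ c(s · x)` for all `x` and `s ∈ S`. -/
def IsBorelColoring (A : Finset ℕ) {k : ℕ}
    (c : {x : ℤ → Bool // x ∈ FreePart} → Fin k) : Prop :=
  Measurable c ∧
    ∀ (x : {x : ℤ → Bool // x ∈ FreePart}) (a : ℕ), a ∈ A →
      ∀ (h : shift (a : ℤ) x.1 ∈ FreePart), c x ≠ c ⟨shift (a : ℤ) x.1, h⟩

/-- The Borel chromatic number `χ(a₁, …, aₙ)` of the Schreier graph `G_S` on `F(2^ℤ)`,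
where `S = {±a : a ∈ A}`: the least `k` admitting a Borel proper `k`-coloring. -/
noncomputable def borelChromatic (A : Finset ℕ) : ℕ :=
  sInf {k : ℕ | ∃ c : {x : ℤ → Bool // x ∈ FreePart} → Fin k, IsBorelColoring A c}

set_option maxRecDepth 10000 in
set_option maxHeartbeats 4000000 in
set_option synthInstance.maxHeartbeats 400000 in
set_option synthInstance.maxSize 2000 in
theorem rigid : ∀ w0 w1 : Fin 3, w0 ≠ w1 → ∀ w2, w1 ≠ w2 → ∀ w3, w2 ≠ w3 → ∀ w4, w3 ≠ w4 →
  ∀ w5, w4 ≠ w5 → w0 ≠ w5 → ∀ w6, w5 ≠ w6 → w1 ≠ w6 → ∀ w7, w6 ≠ w7 → w2 ≠ w7 →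
  ∀ w8, w7 ≠ w8 → w3 ≠ w8 → w0 ≠ w8 → ∀ w9, w8 ≠ w9 → w4 ≠ w9 → w1 ≠ w9 →
  ∀ w10, w9 ≠ w10 → w5 ≠ w10 → w2 ≠ w10 → ∀ w11, w10 ≠ w11 → w6 ≠ w11 → w3 ≠ w11 →
  ∀ w12, w11 ≠ w12 → w7 ≠ w12 → w4 ≠ w12 → w0 = w3 := by decide

/-- The free part as a type. -/
abbrev FP := {x : ℤ → Bool // x ∈ FreePart}

theorem shift_shift (i j : ℤ) (x : ℤ → Bool) : shift i (shift j x) = shift (i + j) x := by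
  funext n; simp [shift, add_assoc]

theorem shift_zero' (x : ℤ → Bool) : shift 0 x = x := by
  funext n; simp [shift]

theorem shift_mem (i : ℤ) {x : ℤ → Bool} (hx : x ∈ FreePart) : shift i x ∈ FreePart := by
  intro s hs h
  apply hx s hs
  have := congrArg (shift (-i)) h
  simpa [shift_shift, shift_zero'] using this

/-- The shift on the free part. -/
def T (i : ℤ) (x : FP) : FP := ⟨shift i x.1, shift_mem i x.2⟩

theorem T_T (i j : ℤ) (x : FP) : T i (T j x) = T (i + j) x := Subtype.ext (shift_shift i j x.1)

theorem T_zero (x : FP) : T 0 x = x := Subtype.ext (shift_zero' x.1)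

theorem measurable_shift (i : ℤ) : Measurable (shift i : (ℤ → Bool) → ℤ → Bool) :=
  measurable_pi_lambda _ fun n => measurable_pi_apply (n + i)

theorem continuous_shift (i : ℤ) : Continuous (shift i : (ℤ → Bool) → ℤ → Bool) :=
  continuous_pi fun n => continuous_apply (n + i)

theorem isOpenMap_shift (i : ℤ) : IsOpenMap (shift i : (ℤ → Bool) → ℤ → Bool) :=
  Homeomorph.isOpenMap
    { toFun := shift i
      invFun := shift (-i)
      left_inv := fun x => by simp [shift_shift, shift_zero']
      right_inv := fun x => by simp [shift_shift, shift_zero']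
      continuous_toFun := continuous_shift i
      continuous_invFun := continuous_shift (-i) }

theorem measurable_T (i : ℤ) : Measurable (T i) :=
  ((measurable_shift i).comp measurable_subtype_coe).subtype_mk

/-- A basic neighbourhood in the product topology contains an interval cylinder. -/
theorem exists_cyl {U : Set (ℤ → Bool)} (hU : IsOpen U) {x : ℤ → Bool} (hx : x ∈ U) :
    ∃ m : ℕ, ∀ y : ℤ → Bool, (∀ n : ℤ, |n| ≤ m → y n = x n) → y ∈ U := by
  obtain ⟨I, u, hu, hsub⟩ := isOpen_pi_iff.1 hU x hx
  refine ⟨I.sup Int.natAbs, fun y hy => hsub ?_⟩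
  intro n hn
  have h1 : n.natAbs ≤ I.sup Int.natAbs := Finset.le_sup (f := Int.natAbs) hn
  rw [hy n (by rw [Int.abs_eq_natAbs]; exact_mod_cast h1)]
  exact (hu n hn).2

theorem freePart_eq : FreePart = ⋂ s : {s : ℤ // s ≠ 0}, {x | shift s.1 x ≠ x} := by
  ext x; simp [FreePart]

theorem isOpen_shift_ne (s : ℤ) : IsOpen {x : ℤ → Bool | shift s x ≠ x} :=
  isOpen_ne_fun (continuous_shift s) continuous_id

theorem measurableSet_freePart : MeasurableSet FreePart := by
  rw [freePart_eq]
  exact MeasurableSet.iInter fun s => (isOpen_shift_ne s.1).measurableSet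

theorem freePart_residual : FreePart ∈ residual (ℤ → Bool) := by
  rw [freePart_eq, countable_iInter_mem]
  rintro ⟨s, hs⟩
  refine residual_of_dense_open (isOpen_shift_ne s) ?_
  rw [dense_iff_inter_open]
  rintro U hU ⟨x, hx⟩
  obtain ⟨m, hm⟩ := exists_cyl hU hx
  have : ∃ k : ℤ, m < |k| ∧ m < |k + s| := by
    rcases lt_or_gt_of_ne hs with h | h
    · exact ⟨-(m + 1), by rw [lt_abs]; omega, by rw [lt_abs]; omega⟩
    · exact ⟨m + 1, by rw [lt_abs]; omega, by rw [lt_abs]; omega⟩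
  obtain ⟨k, hk, hks⟩ := this
  refine ⟨fun n => if |n| ≤ m then x n else decide (n = k), hm _ fun n hn => by simp [hn], ?_⟩
  intro h
  have := congrFun h k
  simp [shift, not_le.2 hk, not_le.2 hks, hs] at this

theorem col_period {c : FP → Fin 3} (hc : IsBorelColoring {1, 5, 8} c) (x : FP) :
    c x = c (T 3 x) := by
  have key : ∀ i j : ℤ, (j - i = 1 ∨ j - i = 5 ∨ j - i = 8) → c (T i x) ≠ c (T j x) := by
    intro i j h
    have h' : ∃ a : ℕ, a ∈ ({1, 5, 8} : Finset ℕ) ∧ j = a + i := by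
      rcases h with h | h | h
      · exact ⟨1, by simp, by push_cast; omega⟩
      · exact ⟨5, by simp, by push_cast; omega⟩
      · exact ⟨8, by simp, by push_cast; omega⟩
    obtain ⟨a, ha, rfl⟩ := h'
    have := hc.2 (T i x) a ha (shift_mem _ (T i x).2)
    rw [← T_T]
    exact this
  have := rigid (c (T 0 x)) (c (T 1 x)) (key _ _ (by norm_num)) (c (T 2 x)) (key _ _ (by norm_num))
    (c (T 3 x)) (key _ _ (by norm_num)) (c (T 4 x)) (key _ _ (by norm_num))
    (c (T 5 x)) (key _ _ (by norm_num)) (key _ _ (by norm_num))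
    (c (T 6 x)) (key _ _ (by norm_num)) (key _ _ (by norm_num))
    (c (T 7 x)) (key _ _ (by norm_num)) (key _ _ (by norm_num))
    (c (T 8 x)) (key _ _ (by norm_num)) (key _ _ (by norm_num)) (key _ _ (by norm_num))
    (c (T 9 x)) (key _ _ (by norm_num)) (key _ _ (by norm_num)) (key _ _ (by norm_num))
    (c (T 10 x)) (key _ _ (by norm_num)) (key _ _ (by norm_num)) (key _ _ (by norm_num))
    (c (T 11 x)) (key _ _ (by norm_num)) (key _ _ (by norm_num)) (key _ _ (by norm_num))
    (c (T 12 x)) (key _ _ (by norm_num)) (key _ _ (by norm_num)) (key _ _ (by norm_num))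
  rwa [T_zero] at this

theorem no_three : ¬ ∃ c : FP → Fin 3, IsBorelColoring {1, 5, 8} c := by
  rintro ⟨c, hc⟩
  have hper : ∀ (k : ℕ) (x : FP), c (T (3 * k) x) = c x := by
    intro k
    induction k with
    | zero => intro x; simp [T_zero]
    | succ k ih =>
      intro x
      rw [← ih x, col_period hc (T (3 * k) x), T_T]
      congr 2; push_cast; ring
  let A : Fin 3 → Set (ℤ → Bool) := fun i => Subtype.val '' (c ⁻¹' {i})
  have hA : ∀ i, MeasurableSet (A i) := fun i =>
    measurableSet_freePart.subtype_image (hc.1 (measurableSet_singleton i))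
  choose U hUo hU using fun i => (hA i).residualEq_isOpen
  have hne : ∃ i, (U i).Nonempty := by
    by_contra hcon
    push Not at hcon
    have h1 : ∀ᶠ x in residual (ℤ → Bool), x ∈ FreePart ∧ ∀ i, (x ∈ A i ↔ x ∈ U i) :=
      Filter.Eventually.and freePart_residual
        (eventually_countable_forall.2 fun i => Filter.eventuallyEq_set.1 (hU i))
    obtain ⟨x, hx, hxi⟩ := (dense_of_mem_residual h1).nonempty
    have h2 := (hxi (c ⟨x, hx⟩)).1 ⟨⟨x, hx⟩, rfl, rfl⟩
    simp [hcon] at h2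
  obtain ⟨i, x, hx⟩ := hne
  obtain ⟨m, hm⟩ := exists_cyl (hUo i) hx
  set t : ℤ := 1 + 3 * ((m + 1 : ℕ) : ℤ) with ht
  have hR : ∀ᶠ y in residual (ℤ → Bool), (y ∈ A i ↔ y ∈ U i) := Filter.eventuallyEq_set.1 (hU i)
  have hR' := (tendsto_residual_of_isOpenMap (continuous_shift t) (isOpenMap_shift t)).eventually hR
  have hd := dense_of_mem_residual (hR.and hR')
  obtain ⟨y, ⟨hy1, hy2⟩, hy3, hy4⟩ := (dense_iff_inter_open.1 hd)
    (U i ∩ shift t ⁻¹' U i) ((hUo i).inter ((hUo i).preimage (continuous_shift t)))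
    ⟨fun n => if |n| ≤ m then x n else x (n - t), hm _ fun n hn => by simp [hn], hm _ fun n hn => by
      have : ¬ |n + t| ≤ m := by
        rw [abs_le] at hn ⊢; push_cast at ht; omega
      simp [shift, this]⟩
  obtain ⟨⟨y', hyF⟩, hcy, rfl⟩ := hy3.2 hy1
  obtain ⟨⟨z, hzF⟩, hcz, hz⟩ := hy4.2 hy2
  simp only [Set.mem_preimage, Set.mem_singleton_iff] at hcy hcz hz
  have e : (⟨z, hzF⟩ : FP) = T 1 (T (3 * ((m + 1 : ℕ) : ℤ)) ⟨y', hyF⟩) := by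
    rw [T_T]; exact Subtype.ext hz
  have h5 := hc.2 (T (3 * ((m + 1 : ℕ) : ℤ)) ⟨y', hyF⟩) 1 (by simp) (shift_mem _ (Subtype.prop _))
  apply h5
  rw [hper, hcy, ← hcz, e]
  rfl

def Wd (n p : ℕ) : Fin 4 :=
  if n ≤ p then Fin.ofNat 4 ((p - n) % 3)
  else if n % 3 = 1 ∧ p + 1 = n then 3
  else if n % 3 = 2 ∧ (p + 1 = n ∨ p + 8 = n) then 3
  else if n % 3 = 2 ∧ n < p + 8 then Fin.ofNat 4 ((p + 7 - n) % 3)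
  else Fin.ofNat 4 (p % 3)

theorem Wd_pre (n p : ℕ) (hn : 20 ≤ n) (hp : p < 8) : Wd n p = Fin.ofNat 4 (p % 3) := by
  unfold Wd
  rw [if_neg (by omega), if_neg (by omega), if_neg (by omega), if_neg (by omega)]

theorem Wd_post (n p : ℕ) (hn : n ≤ p) : Wd n p = Fin.ofNat 4 ((p - n) % 3) := by
  unfold Wd
  rw [if_pos hn]

set_option maxRecDepth 100000 in
theorem Wd_proper : ∀ n < 40, 20 ≤ n → ∀ p < n,
   Wd n p ≠ Wd n (p+1) ∧ Wd n p ≠ Wd n (p+5) ∧ Wd n p ≠ Wd n (p+8) := by decide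

/-- A countable Borel colouring separating points at distance less than 20. -/
theorem exists_phi : ∃ φ : FP → ℕ, Measurable φ ∧
    ∀ (x : FP) (i : ℤ), i ≠ 0 → |i| < 20 → φ (T i x) ≠ φ x := by
  classical
  let Q := Finset ℤ × Finset ℤ
  let V : Q → Set FP := fun q => {x | (∀ n ∈ q.1, (x.1 n = true ↔ n ∈ q.2)) ∧
    ∀ i ∈ Finset.Ioo (-20 : ℤ) 20, i ≠ 0 → ∃ n ∈ q.1, x.1 (n + i) ≠ x.1 n}
  have hev : ∀ n : ℤ, Measurable fun x : FP => x.1 n := fun n =>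
    (measurable_pi_apply n).comp measurable_subtype_coe
  have hV : ∀ q, MeasurableSet (V q) := by
    intro q
    have : V q = (⋂ n ∈ q.1, {x : FP | x.1 n = true ↔ n ∈ q.2}) ∩
        ⋂ i ∈ Finset.Ioo (-20 : ℤ) 20, ⋂ (_ : i ≠ 0), ⋃ n ∈ q.1,
          {x : FP | x.1 n = x.1 (n + i)}ᶜ := by
      ext x
      simp only [V, Set.mem_ofPred_eq, Set.mem_inter_iff, Set.mem_iInter, Set.mem_iUnion,
        Set.mem_compl_iff, ne_eq, exists_prop, eq_comm]
    rw [this]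
    refine MeasurableSet.inter (Finset.measurableSet_biInter _ fun n _ => ?_)
      (Finset.measurableSet_biInter _ fun i _ => MeasurableSet.iInter fun _ =>
        Finset.measurableSet_biUnion _ fun n _ => (measurableSet_eq_fun (hev _) (hev _)).compl)
    by_cases h : n ∈ q.2
    · simp only [h, iff_true]; exact hev n (measurableSet_singleton true)
    · simp only [h, iff_false]; exact (hev n (measurableSet_singleton true)).compl
  have hcov : ∀ x : FP, ∃ j : ℕ, ∃ q : Q, Encodable.encode q = j ∧ x ∈ V q := by
    intro x
    have h : ∀ i : ℤ, i ≠ 0 → ∃ n, x.1 (n + i) ≠ x.1 n := by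
      intro i hi
      by_contra hcon
      push Not at hcon
      exact x.2 i hi (funext hcon)
    choose! g hg using h
    let I := (Finset.Ioo (-20 : ℤ) 20).image g
    refine ⟨_, (I, I.filter fun n => x.1 n = true), rfl, ?_, ?_⟩
    · intro n hn
      have hn' : n ∈ I := hn
      simp [hn']
    · intro i hi h0
      exact ⟨g i, Finset.mem_image_of_mem _ hi, hg i h0⟩
  refine ⟨fun x => Nat.find (hcov x), ?_, ?_⟩
  · refine measurable_find hcov fun j => ?_
    have : {x : FP | ∃ q : Q, Encodable.encode q = j ∧ x ∈ V q} =
        ⋃ q : Q, ⋃ (_ : Encodable.encode q = j), V q := by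
      ext x; simp
    rw [this]
    exact MeasurableSet.iUnion fun q => MeasurableSet.iUnion fun _ => hV q
  · intro x i hi hlt heq
    obtain ⟨q, hq, hx⟩ := Nat.find_spec (hcov x)
    obtain ⟨q', hq', hx'⟩ := Nat.find_spec (hcov (T i x))
    have : q' = q := Encodable.encode_injective (by rw [hq, hq']; exact heq)
    subst this
    obtain ⟨n, hn, hne⟩ := hx.2 i (by rw [abs_lt] at hlt; simpa using hlt) hi
    apply hne
    have h1 := hx.1 n hn
    have h2 := hx'.1 n hn
    change x.1 (n + i) = true ↔ _ at h2
    exact Bool.eq_iff_iff.2 (h2.trans h1.symm)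

/-- Greedy stages of the maximal independent set. -/
def stage (φ : FP → ℕ) : ℕ → Set FP
  | 0 => ∅
  | j + 1 => stage φ j ∪ {x | φ x = j ∧ ∀ i : ℤ, |i| < 20 → T i x ∉ stage φ j}

theorem exists_marker : ∃ M : Set FP, MeasurableSet M ∧
    (∀ (x : FP) (i : ℤ), x ∈ M → T i x ∈ M → |i| < 20 → i = 0) ∧
    ∀ x : FP, ∃ i : ℤ, |i| < 20 ∧ T i x ∈ M := by
  obtain ⟨φ, hφ, hsep⟩ := exists_phi
  have hmono : Monotone (stage φ) := monotone_nat_of_le_succ fun j => Set.subset_union_left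
  have hentry : ∀ j x, x ∈ stage φ j →
      φ x < j ∧ ∀ i : ℤ, |i| < 20 → T i x ∉ stage φ (φ x) := by
    intro j
    induction j with
    | zero => intro x hx; exact hx.elim
    | succ j ih =>
      rintro x (hx | ⟨rfl, hx⟩)
      · exact ⟨(ih x hx).1.trans (Nat.lt_succ_self j), (ih x hx).2⟩
      · exact ⟨Nat.lt_succ_self _, hx⟩
  have hself : ∀ j x, x ∈ stage φ j → x ∈ stage φ (φ x + 1) := by
    intro j x hx
    exact Or.inr ⟨rfl, (hentry j x hx).2⟩
  refine ⟨⋃ j, stage φ j, MeasurableSet.iUnion fun j => ?_, ?_, ?_⟩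
  · induction j with
    | zero => exact MeasurableSet.empty
    | succ j ih =>
      refine ih.union ?_
      have : {x | φ x = j ∧ ∀ i : ℤ, |i| < 20 → T i x ∉ stage φ j} =
          φ ⁻¹' {j} ∩ ⋂ i : ℤ, ⋂ (_ : |i| < 20), (T i ⁻¹' stage φ j)ᶜ := by
        ext x; simp
      rw [this]
      exact (hφ (measurableSet_singleton j)).inter (MeasurableSet.iInter fun i =>
        MeasurableSet.iInter fun _ => (measurable_T i ih).compl)
  · intro x i hx hTx hi
    by_contra h0
    obtain ⟨j, hj⟩ := Set.mem_iUnion.1 hx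
    obtain ⟨k, hk⟩ := Set.mem_iUnion.1 hTx
    rcases lt_trichotomy (φ (T i x)) (φ x) with h | h | h
    · exact (hentry j x hj).2 i hi (hmono h (hself k _ hk))
    · exact hsep x i h0 hi h
    · refine (hentry k _ hk).2 (-i) (by rwa [abs_neg]) ?_
      rw [T_T, neg_add_cancel, T_zero]
      exact hmono h (hself j _ hj)
  · intro x
    by_cases h : ∃ i : ℤ, |i| < 20 ∧ T i x ∈ stage φ (φ x)
    · obtain ⟨i, hi, hx⟩ := h
      exact ⟨i, hi, Set.mem_iUnion.2 ⟨_, hx⟩⟩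
    · push Not at h
      refine ⟨0, by norm_num, Set.mem_iUnion.2 ⟨φ x + 1, Or.inr ⟨by rw [T_zero], ?_⟩⟩⟩
      rw [T_zero]; exact h

/-- `x` lies at position `p` of a block of length `n`. -/
def Blk (M : Set FP) (x : FP) (p n : ℕ) : Prop :=
  p < n ∧ T (-p) x ∈ M ∧ T (n - p) x ∈ M ∧ ∀ j : ℤ, 0 < j → j < n → T (j - p) x ∉ M

theorem exists_four : ∃ c : FP → Fin 4, IsBorelColoring {1, 5, 8} c := by
  classical
  obtain ⟨M, hM, hind, hmax⟩ := exists_marker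
  have hind' : ∀ (x : FP) (i j : ℤ), T i x ∈ M → T j x ∈ M → |i - j| < 20 → i = j := by
    intro x i j hi hj h
    have := hind (T j x) (i - j) hj (by rw [T_T, sub_add_cancel]; exact hi) h
    omega
  have hmax' : ∀ (x : FP) (k : ℤ), ∃ i, k - 20 < i ∧ i < k + 20 ∧ T i x ∈ M := by
    intro x k
    obtain ⟨i, hi, h⟩ := hmax (T k x)
    rw [T_T] at h
    rw [abs_lt] at hi
    exact ⟨i + k, by omega, by omega, h⟩
  have hex : ∀ x : FP, ∃ r : ℕ × ℕ, Blk M x r.1 r.2 := by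
    intro x
    have h1 : ∃ p : ℕ, T (-p) x ∈ M := by
      obtain ⟨i, _, hi, h⟩ := hmax' x (-20)
      exact ⟨(-i).toNat, by rwa [show -(((-i).toNat : ℕ) : ℤ) = i by omega]⟩
    have h2 : ∃ q : ℕ, T (q + 1) x ∈ M := by
      obtain ⟨i, hi, _, h⟩ := hmax' x 20
      exact ⟨(i - 1).toNat, by rwa [show (((i - 1).toNat : ℕ) : ℤ) + 1 = i by omega]⟩
    refine ⟨(Nat.find h1, Nat.find h1 + (Nat.find h2 + 1)), by simp, Nat.find_spec h1, ?_, ?_⟩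
    · have := Nat.find_spec h2
      push_cast
      rwa [add_sub_cancel_left]
    · intro j hj0 hjn hj
      push_cast at hjn
      simp only at hj
      rcases le_or_gt j (Nat.find h1 : ℤ) with h | h
      · refine Nat.find_min h1 (m := (Nat.find h1 - j).toNat) (by omega) ?_
        rwa [show -((((Nat.find h1 : ℤ) - j).toNat : ℕ) : ℤ) = j - Nat.find h1 by omega]
      · refine Nat.find_min h2 (m := (j - Nat.find h1 - 1).toNat) (by omega) ?_
        rwa [show (((j - (Nat.find h1 : ℤ) - 1).toNat : ℕ) : ℤ) + 1 = j - Nat.find h1 by omega]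
  have huniq : ∀ x p n p' n', Blk M x p n → Blk M x p' n' → p = p' ∧ n = n' := by
    rintro x p n p' n' ⟨h1, h2, h3, h4⟩ ⟨h1', h2', h3', h4'⟩
    have hp : p = p' := by
      rcases lt_trichotomy p p' with h | h | h
      · exact absurd h2 (by
          have := h4' (p' - p) (by omega) (by omega)
          rwa [show (p' : ℤ) - p - p' = -p by ring] at this)
      · exact h
      · exact absurd h2' (by
          have := h4 (p - p') (by omega) (by omega)
          rwa [show (p : ℤ) - p' - p = -p' by ring] at this)
    subst hp
    refine ⟨rfl, ?_⟩
    rcases lt_trichotomy n n' with h | h | h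
    · exact absurd h3 (h4' n (by omega) (by omega))
    · exact h
    · exact absurd h3' (h4 n' (by omega) (by omega))
  have hbd : ∀ x p n, Blk M x p n → 20 ≤ n ∧ n < 40 := by
    rintro x p n ⟨h1, h2, h3, h4⟩
    constructor
    · by_contra h
      have := hind' x _ _ h3 h2 (by rw [abs_lt]; omega)
      omega
    · by_contra h
      obtain ⟨i, hi1, hi2, hi⟩ := hmax' x (20 - p)
      refine h4 (i + p) (by omega) (by omega) ?_
      rwa [add_sub_cancel_right]
  choose r hr using hex
  have hrm : Measurable r := by
    refine measurable_to_countable' fun q => ?_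
    have : r ⁻¹' {q} = {x | Blk M x q.1 q.2} := by
      ext x
      constructor
      · rintro rfl; exact hr x
      · intro h
        have := huniq x _ _ _ _ (hr x) h
        exact Prod.ext this.1 this.2
    rw [this]
    have : {x | Blk M x q.1 q.2} = {_x | q.1 < q.2} ∩ (T (-q.1) ⁻¹' M ∩ (T (q.2 - q.1) ⁻¹' M ∩
        ⋂ j : ℤ, ⋂ (_ : 0 < j), ⋂ (_ : j < q.2), (T (j - q.1) ⁻¹' M)ᶜ)) := by
      ext x; simp [Blk]
    rw [this]
    exact (MeasurableSet.const _).inter ((measurable_T _ hM).inter ((measurable_T _ hM).inter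
      (MeasurableSet.iInter fun j => MeasurableSet.iInter fun _ => MeasurableSet.iInter fun _ =>
        (measurable_T _ hM).compl)))
  refine ⟨fun x => Wd (r x).2 (r x).1,
    (measurable_of_countable fun q : ℕ × ℕ => Wd q.2 q.1).comp hrm, ?_⟩
  intro x a ha hF
  change Wd (r x).2 (r x).1 ≠ Wd (r (T a x)).2 (r (T a x)).1
  have hx := hr x
  have hy := hr (T a x)
  generalize hpx : (r x).1 = p at *
  generalize hnx : (r x).2 = n at *
  generalize hpy : (r (T a x)).1 = p' at *
  generalize hny : (r (T a x)).2 = n' at *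
  obtain ⟨hb1, hb2⟩ := hbd _ _ _ hx
  obtain ⟨hb1', hb2'⟩ := hbd _ _ _ hy
  have ha8 : 1 ≤ a ∧ a ≤ 8 := by
    simp only [Finset.mem_insert, Finset.mem_singleton] at ha; omega
  have hprop : Wd n p ≠ Wd n (p + a) := by
    have := Wd_proper n hb2 hb1 p hx.1
    simp only [Finset.mem_insert, Finset.mem_singleton] at ha
    rcases ha with rfl | rfl | rfl
    exacts [this.1, this.2.1, this.2.2]
  have h1 := hx.1
  by_cases hlt : p + a < n
  · have : Blk M (T a x) (p + a) n := by
      refine ⟨hlt, ?_, ?_, ?_⟩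
      · rw [T_T]; convert hx.2.1 using 2; push_cast; ring
      · rw [T_T]; convert hx.2.2.1 using 2; push_cast; ring
      · intro j hj0 hjn
        rw [T_T]; convert hx.2.2.2 j hj0 hjn using 3; push_cast; ring
    obtain ⟨rfl, rfl⟩ := huniq _ _ _ _ _ hy this
    exact hprop
  · have hp' : (p' : ℤ) = p + a - n := by
      obtain ⟨g1, g2, g3, g4⟩ := hy
      rw [T_T] at g2
      have hge : (p' : ℤ) ≤ p + a - n := by
        by_contra hcon
        refine g4 (p' - (p + a - n)) (by omega) (by omega) ?_
        rw [T_T]; convert hx.2.2.1 using 2; ring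
      have := hind' x _ _ g2 hx.2.2.1 (by rw [abs_lt]; omega)
      omega
    rw [Wd_pre n' p' hb1' (by omega), show p' = p + a - n by omega, ← Wd_post n (p + a) (by omega)]
    exact hprop

theorem borelChromatic_one_five_eight :
    borelChromatic {1, 5, 8} = 4 ∧
    (∃ c : {x : ℤ → Bool // x ∈ FreePart} → Fin 4,
        IsBorelColoring {1, 5, 8} c) ∧
    ¬ ∃ c : {x : ℤ → Bool // x ∈ FreePart} → Fin 3,
        IsBorelColoring {1, 5, 8} c := by
  refine ⟨?_, exists_four, no_three⟩
  apply le_antisymm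
  · exact Nat.sInf_le exists_four
  · refine le_csInf ⟨4, exists_four⟩ ?_
    rintro k ⟨c, hc⟩
    by_contra hk
    have hk3 : k ≤ 3 := by omega
    refine no_three ⟨fun x => Fin.castLE hk3 (c x),
      (measurable_of_countable (Fin.castLE hk3)).comp hc.1, fun x a ha h heq => ?_⟩
    exact hc.2 x a ha h (Fin.castLE_injective hk3 heq)
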